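/- In the SVM dual setup, let X ∈ ℝ^{p×d} have rank ρ and compact singular value decomposition X = UΣV^T, let R ∈ ℝ^{d×r} be any matrix, and set E = I_ρ − V^T R R^T V; assume ‖E‖₂ < 1. Suppose α* ∈ K maximizes f over K and α̃* ∈ K maximizes f̃ over K. Then f(α*) ≥ f̃(α̃*) − (1/2) · (‖E‖₂ / (1 − ‖E‖₂)) · ‖R^T X^T Y α̃*‖₂². -/

import Mathlib

open Matrix

/-- Euclidean norm of a vector in ℝ^n. -/
noncomputable def euclNorm {n : ℕ} (x : Fin n → ℝ) : ℝ := Real.sqrt (∑ i, x i ^ 2)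

/-- Spectral norm (ℓ₂ operator norm) of a real matrix: the supremum of `‖A x‖₂`
over unit vectors `x`. -/
noncomputable def specNorm {m n : ℕ} (A : Matrix (Fin m) (Fin n) ℝ) : ℝ :=
  sSup {c : ℝ | ∃ x : Fin n → ℝ, euclNorm x = 1 ∧ c = euclNorm (A.mulVec x)}

/-- The SVM dual feasible set `K = {α : 0 ≤ αᵢ ≤ C, Σᵢ yᵢαᵢ = 0}`. -/
def svmFeasible {p : ℕ} (y : Fin p → ℝ) (C : ℝ) (α : Fin p → ℝ) : Prop :=
  (∀ i, 0 ≤ α i ∧ α i ≤ C) ∧ ∑ i, y i * α i = 0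

/-- The SVM dual objective `f(α) = Σᵢ αᵢ − (1/2)‖XᵀYα‖₂²`, where `Y = diag(y)`. -/
noncomputable def svmDualObj {p d : ℕ} (X : Matrix (Fin p) (Fin d) ℝ) (y : Fin p → ℝ)
    (α : Fin p → ℝ) : ℝ :=
  ∑ i, α i - (1 / 2) * euclNorm (Xᵀ.mulVec ((Matrix.diagonal y).mulVec α)) ^ 2

/-- The reduced SVM dual objective `f̃(α) = Σᵢ αᵢ − (1/2)‖RᵀXᵀYα‖₂²`. -/
noncomputable def svmDualObjRed {p d r : ℕ} (X : Matrix (Fin p) (Fin d) ℝ)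
    (R : Matrix (Fin d) (Fin r) ℝ) (y : Fin p → ℝ) (α : Fin p → ℝ) : ℝ :=
  ∑ i, α i - (1 / 2) * euclNorm (Rᵀ.mulVec (Xᵀ.mulVec ((Matrix.diagonal y).mulVec α))) ^ 2

/-!
Write `XᵀYα̃* = V w`, so that `‖V w‖₂ = ‖w‖₂` and
`‖Rᵀ V w‖₂² = ‖w‖₂² − wᵀEw ≥ (1 − ‖E‖₂)‖w‖₂²`. Hence the penalty `‖XᵀYα̃*‖₂²` in `f(α̃*)` is at most
`1 / (1 − ‖E‖₂) = 1 + ‖E‖₂ / (1 − ‖E‖₂)` times the penalty `‖RᵀXᵀYα̃*‖₂²` in `f̃(α̃*)`, and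
`f(α̃*) ≤ f(α*)` because `α̃*` is feasible for the problem that `α*` solves.
-/

section EuclideanNorm

variable {m n : ℕ}

lemma euclNorm_eq_norm_toLp (x : Fin n → ℝ) : euclNorm x = ‖WithLp.toLp 2 x‖ := by
  simp only [euclNorm, EuclideanSpace.norm_eq, Real.norm_eq_abs, sq_abs]

lemma euclNorm_sq_eq_dotProduct (x : Fin n → ℝ) : euclNorm x ^ 2 = x ⬝ᵥ x := by
  rw [euclNorm_eq_norm_toLp, ← real_inner_self_eq_norm_sq, EuclideanSpace.inner_toLp_toLp,
    star_trivial]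

lemma euclNorm_mulVec_sq (A : Matrix (Fin m) (Fin n) ℝ) (x : Fin n → ℝ) :
    euclNorm (A *ᵥ x) ^ 2 = x ⬝ᵥ ((Aᵀ * A) *ᵥ x) := by
  rw [euclNorm_sq_eq_dotProduct, dotProduct_mulVec, vecMul_mulVec, ← dotProduct_mulVec]

lemma euclNorm_mulVec_sq_of_transpose_mul_self_eq_one {V : Matrix (Fin m) (Fin n) ℝ}
    (hV : Vᵀ * V = 1) (x : Fin n → ℝ) : euclNorm (V *ᵥ x) ^ 2 = euclNorm x ^ 2 := by
  rw [euclNorm_mulVec_sq, hV, one_mulVec, euclNorm_sq_eq_dotProduct]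

end EuclideanNorm

section SpectralNorm

variable {m n : ℕ}

open scoped Matrix.Norms.L2Operator in
lemma specNorm_eq_l2_opNorm (A : Matrix (Fin m) (Fin n) ℝ) : specNorm A = ‖A‖ := by
  rw [l2_opNorm_def, ← ContinuousLinearMap.sSup_sphere_eq_norm, specNorm]
  congr 1
  ext c
  constructor
  · rintro ⟨x, hx, rfl⟩
    exact ⟨WithLp.toLp 2 x, by rwa [mem_sphere_zero_iff_norm, ← euclNorm_eq_norm_toLp],
      (euclNorm_eq_norm_toLp (A *ᵥ x)).symm⟩
  · rintro ⟨x, hx, rfl⟩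
    exact ⟨x.ofLp, (euclNorm_eq_norm_toLp x.ofLp).trans (mem_sphere_zero_iff_norm.mp hx),
      (euclNorm_eq_norm_toLp (A *ᵥ x.ofLp)).symm⟩

lemma dotProduct_mulVec_self_le_specNorm (A : Matrix (Fin n) (Fin n) ℝ) (x : Fin n → ℝ) :
    x ⬝ᵥ (A *ᵥ x) ≤ specNorm A * euclNorm x ^ 2 := by
  rw [specNorm_eq_l2_opNorm, ← l2_opNorm_toEuclideanCLM, euclNorm_eq_norm_toLp]
  set v := WithLp.toLp 2 x
  set T := toEuclideanCLM (𝕜 := ℝ) A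
  calc x ⬝ᵥ (A *ᵥ x) = inner ℝ v (T v) := (inner_toEuclideanCLM A v v).symm
    _ ≤ ‖v‖ * ‖T v‖ := real_inner_le_norm v (T v)
    _ ≤ ‖v‖ * (‖T‖ * ‖v‖) := by gcongr; exact T.le_opNorm v
    _ = ‖T‖ * ‖v‖ ^ 2 := by ring

lemma one_sub_specNorm_mul_euclNorm_sq_le (B : Matrix (Fin m) (Fin n) ℝ) (x : Fin n → ℝ) :
    (1 - specNorm (1 - Bᵀ * B)) * euclNorm x ^ 2 ≤ euclNorm (B *ᵥ x) ^ 2 := by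
  have h_defect : x ⬝ᵥ ((1 - Bᵀ * B) *ᵥ x) = euclNorm x ^ 2 - euclNorm (B *ᵥ x) ^ 2 := by
    rw [sub_mulVec, one_mulVec, dotProduct_sub, ← euclNorm_sq_eq_dotProduct, ← euclNorm_mulVec_sq]
  linarith [dotProduct_mulVec_self_le_specNorm (1 - Bᵀ * B) x]

end SpectralNorm

section DualComparison

variable {p d r ρ : ℕ} {X : Matrix (Fin p) (Fin d) ℝ} {W : Matrix (Fin p) (Fin ρ) ℝ}
  {V : Matrix (Fin d) (Fin ρ) ℝ}

lemma one_sub_specNorm_mul_euclNorm_transpose_mulVec_sq_le (hV : Vᵀ * V = 1) (hX : X = W * Vᵀ)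
    (R : Matrix (Fin d) (Fin r) ℝ) (u : Fin p → ℝ) :
    (1 - specNorm (1 - Vᵀ * R * Rᵀ * V)) * euclNorm (Xᵀ *ᵥ u) ^ 2
      ≤ euclNorm (Rᵀ *ᵥ (Xᵀ *ᵥ u)) ^ 2 := by
  have h_row : Xᵀ *ᵥ u = V *ᵥ (Wᵀ *ᵥ u) := by
    rw [hX, transpose_mul, transpose_transpose, mulVec_mulVec]
  have h_gram : Vᵀ * R * Rᵀ * V = (Rᵀ * V)ᵀ * (Rᵀ * V) := by
    rw [transpose_mul, transpose_transpose, Matrix.mul_assoc _ Rᵀ]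
  rw [h_row, euclNorm_mulVec_sq_of_transpose_mul_self_eq_one hV, h_gram, mulVec_mulVec (Wᵀ *ᵥ u)]
  exact one_sub_specNorm_mul_euclNorm_sq_le (Rᵀ * V) (Wᵀ *ᵥ u)

theorem svm_dual_optimum_comparison_relative_general (hV : Vᵀ * V = 1) (hX : X = W * Vᵀ)
    {R : Matrix (Fin d) (Fin r) ℝ} (hE : specNorm (1 - Vᵀ * R * Rᵀ * V) < 1)
    {y : Fin p → ℝ} {K : Set (Fin p → ℝ)} {αs αt : Fin p → ℝ}
    (hαs : IsMaxOn (svmDualObj X y) K αs) (hαt : αt ∈ K) :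
    svmDualObjRed X R y αt
        - (1 / 2)
          * (specNorm (1 - Vᵀ * R * Rᵀ * V) / (1 - specNorm (1 - Vᵀ * R * Rᵀ * V)))
          * euclNorm (Rᵀ *ᵥ (Xᵀ *ᵥ (diagonal y *ᵥ αt))) ^ 2
      ≤ svmDualObj X y αs := by
  set e := specNorm (1 - Vᵀ * R * Rᵀ * V)
  set q := euclNorm (Rᵀ *ᵥ (Xᵀ *ᵥ (diagonal y *ᵥ αt))) ^ 2 with hq
  have h_pos : 0 < 1 - e := sub_pos.mpr hE
  have h_penalty : euclNorm (Xᵀ *ᵥ (diagonal y *ᵥ αt)) ^ 2 ≤ q / (1 - e) := by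
    rw [le_div_iff₀' h_pos]
    exact one_sub_specNorm_mul_euclNorm_transpose_mulVec_sq_le hV hX R _
  calc svmDualObjRed X R y αt - 1 / 2 * (e / (1 - e)) * q
      = ∑ i, αt i - 1 / 2 * (q / (1 - e)) := by
        rw [svmDualObjRed, ← hq]
        field_simp
        ring
    _ ≤ svmDualObj X y αt := by
        rw [svmDualObj]
        gcongr
    _ ≤ svmDualObj X y αs := hαs hαt

end DualComparison

/-- **Dual optimum comparison, relative form (eqn. (8) of the paper).** If
`E = I_ρ − VᵀRRᵀV` satisfies `‖E‖₂ < 1`, `α*` maximizes the SVM dual `f` over `K`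
and `α̃*` maximizes the reduced dual `f̃` over `K`, then
`f(α*) ≥ f̃(α̃*) − (1/2)(‖E‖₂/(1 − ‖E‖₂))‖RᵀXᵀYα̃*‖₂²`. -/
theorem svm_dual_optimum_comparison_relative
    (p d r ρ : ℕ)
    (X : Matrix (Fin p) (Fin d) ℝ) (hrank : X.rank = ρ)
    (U : Matrix (Fin p) (Fin ρ) ℝ) (S : Matrix (Fin ρ) (Fin ρ) ℝ)
    (V : Matrix (Fin d) (Fin ρ) ℝ)
    (hU : Uᵀ * U = 1) (hV : Vᵀ * V = 1)
    (hS : ∃ σ : Fin ρ → ℝ, (∀ i, 0 < σ i) ∧ S = Matrix.diagonal σ)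
    (hX : X = U * S * Vᵀ)
    (R : Matrix (Fin d) (Fin r) ℝ)
    (hE : specNorm ((1 : Matrix (Fin ρ) (Fin ρ) ℝ) - Vᵀ * R * Rᵀ * V) < 1)
    (y : Fin p → ℝ) (hy : ∀ i, y i = 1 ∨ y i = -1)
    (C : ℝ) (hC : 0 < C)
    (αs : Fin p → ℝ) (hαs : svmFeasible y C αs)
    (hαsmax : ∀ β, svmFeasible y C β → svmDualObj X y β ≤ svmDualObj X y αs)
    (αt : Fin p → ℝ) (hαt : svmFeasible y C αt)
    (hαtmax : ∀ β, svmFeasible y C β → svmDualObjRed X R y β ≤ svmDualObjRed X R y αt) :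
    svmDualObj X y αs
      ≥ svmDualObjRed X R y αt
        - (1 / 2)
          * (specNorm ((1 : Matrix (Fin ρ) (Fin ρ) ℝ) - Vᵀ * R * Rᵀ * V)
              / (1 - specNorm ((1 : Matrix (Fin ρ) (Fin ρ) ℝ) - Vᵀ * R * Rᵀ * V)))
          * euclNorm (Rᵀ.mulVec (Xᵀ.mulVec ((Matrix.diagonal y).mulVec αt))) ^ 2 :=
  svm_dual_optimum_comparison_relative_general hV hX hE (K := {α | svmFeasible y C α})
    hαsmax hαt
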